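/- Let (Δ; Ω, ≤) be a homological system over an Artin algebra Λ. Then the category F(Δ) of Δ-filtered modules is closed under direct summands: if M ∈ F(Δ) and M = M_1 ⊕ M_2 is a direct sum decomposition (i.e., M_1 and M_2 are submodules of M with M_1 + M_2 = M and M_1 ∩ M_2 = 0), then M_1 ∈ F(Δ) and M_2 ∈ F(Δ). -/

import Mathlib

universe u v

open DirectSum

/-- The height function of a finite preordered set `Ω`: `h ω` is `1` plus the length of the
longest strict chain `ω₀ < ω₁ < ⋯ < ωₙ = ω` ending at `ω` (so minimal elements have height 1). -/
noncomputable def heightFun {Ω : Type v} [Preorder Ω] [Fintype Ω] (ω : Ω) : ℕ :=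
  1 + (⨆ (p : LTSeries Ω) (_ : p.last = ω), (p.length : ℕ∞)).toNat

/-- `EverySESSplits Λ A B` says that every short exact sequence of `Λ`-modules
`0 → A → E → B → 0` splits; this is the statement `Ext¹_Λ(B, A) = 0`. -/
def EverySESSplits (Λ : Type u) [Ring Λ] (A B : Type u)
    [AddCommGroup A] [Module Λ A] [AddCommGroup B] [Module Λ B] : Prop :=
  ∀ (E : Type u) [AddCommGroup E] [Module Λ E] (f : A →ₗ[Λ] E) (g : E →ₗ[Λ] B),
    Function.Injective f → Function.Surjective g → LinearMap.range f = LinearMap.ker g →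
      ∃ s : B →ₗ[Λ] E, g.comp s = LinearMap.id

/-- A homological system `(Δ; Ω, ≤)` over the ring `Λ`:
`Ω` is a finite (pre)ordered index set; the `Δ ω` are pairwise nonisomorphic indecomposable
finitely generated `Λ`-modules satisfying (HS3) `Hom (Δ ω, Δ ω') ≠ 0 → ω ≤ ω'` and
(HS4) `Ext¹ (Δ ω, Δ ω') ≠ 0 → ω ≤ ω' ∧ ¬ ω' ≤ ω` (the latter expressed contrapositively via
splitting of all short exact sequences `0 → Δ ω' → E → Δ ω → 0`). -/
structure IsHomologicalSystem (Λ : Type u) [Ring Λ] {Ω : Type v} [Preorder Ω] [Fintype Ω]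
    (Δ : Ω → Type u) [∀ ω, AddCommGroup (Δ ω)] [∀ ω, Module Λ (Δ ω)] : Prop where
  fg : ∀ ω, Module.Finite Λ (Δ ω)
  nontrivial : ∀ ω, Nontrivial (Δ ω)
  indecomposable : ∀ ω (A B : Submodule Λ (Δ ω)), IsCompl A B → A = ⊥ ∨ B = ⊥
  pairwise_nonIso : ∀ ω ω', ω ≠ ω' → IsEmpty (Δ ω ≃ₗ[Λ] Δ ω')
  hs3 : ∀ ω ω' (f : Δ ω →ₗ[Λ] Δ ω'), f ≠ 0 → ω ≤ ω'
  hs4 : ∀ ω ω', ¬(ω ≤ ω' ∧ ¬ ω' ≤ ω) → EverySESSplits Λ (Δ ω') (Δ ω)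

/-- `IsDeltaFiltration Λ Δ t F` says that `⊥ = F 0 ⊊ F 1 ⊊ ⋯ ⊊ F t = ⊤` is a `Δ`-filtration
of `M`, i.e. each factor `F (i+1) / F i` is isomorphic to some `Δ ω`. -/
def IsDeltaFiltration (Λ : Type u) [Ring Λ] {Ω : Type v} [Preorder Ω] [Fintype Ω]
    (Δ : Ω → Type u) [∀ ω, AddCommGroup (Δ ω)] [∀ ω, Module Λ (Δ ω)]
    {M : Type u} [AddCommGroup M] [Module Λ M]
    (t : ℕ) (F : Fin (t + 1) → Submodule Λ M) : Prop :=
  F 0 = ⊥ ∧ F (Fin.last t) = ⊤ ∧ StrictMono F ∧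
    ∀ i : Fin t, ∃ ω : Ω,
      Nonempty ((F i.succ ⧸ (F i.castSucc).comap (F i.succ).subtype) ≃ₗ[Λ] Δ ω)

/-- `M ∈ 𝔉(Δ)`: the `Λ`-module `M` admits a `Δ`-filtration. -/
def MemFiltCat (Λ : Type u) [Ring Λ] {Ω : Type v} [Preorder Ω] [Fintype Ω]
    (Δ : Ω → Type u) [∀ ω, AddCommGroup (Δ ω)] [∀ ω, Module Λ (Δ ω)]
    (M : Type u) [AddCommGroup M] [Module Λ M] : Prop :=
  ∃ (t : ℕ) (F : Fin (t + 1) → Submodule Λ M), IsDeltaFiltration Λ Δ t F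

/-- `ℓ_ω(F)`: the number of factors of the filtration `F` isomorphic to `Δ ω`. -/
noncomputable def ellOmega (Λ : Type u) [Ring Λ] {Ω : Type v} [Preorder Ω] [Fintype Ω]
    (Δ : Ω → Type u) [∀ ω, AddCommGroup (Δ ω)] [∀ ω, Module Λ (Δ ω)]
    {M : Type u} [AddCommGroup M] [Module Λ M]
    (t : ℕ) (F : Fin (t + 1) → Submodule Λ M) (ω : Ω) : ℕ :=
  Nat.card {i : Fin t //
    Nonempty ((F i.succ ⧸ (F i.castSucc).comap (F i.succ).subtype) ≃ₗ[Λ] Δ ω)}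

/-- An `h`-filtration `0 = W (a+1) ⊆ W a ⊆ ⋯ ⊆ W 1 = M` of `M`: the `i`-th layer
`W i / W (i+1)` is a finite direct sum `⨁_{ω : h ω = i} (n ω) • Δ ω` of copies of the `Δ ω`
with `heightFun ω = i`. -/
def IsHFiltration (Λ : Type u) [Ring Λ] {Ω : Type v} [Preorder Ω] [Fintype Ω]
    (Δ : Ω → Type u) [∀ ω, AddCommGroup (Δ ω)] [∀ ω, Module Λ (Δ ω)]
    {M : Type u} [AddCommGroup M] [Module Λ M]
    (a : ℕ) (W : ℕ → Submodule Λ M) (n : Ω → ℕ) : Prop :=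
  W (a + 1) = ⊥ ∧ W 1 = ⊤ ∧ (∀ i, 1 ≤ i → i ≤ a → W (i + 1) ≤ W i) ∧
    ∀ i, 1 ≤ i → i ≤ a →
      Nonempty ((W i ⧸ (W (i + 1)).comap (W i).subtype) ≃ₗ[Λ]
        ⨁ ω : {ω : Ω // heightFun ω = i}, (Fin (n ω.1) → Δ ω.1))

/-- The trace `tr_L(N)` of `L` in `N`: the sum of the images of all `Λ`-homomorphisms `L → N`. -/
def traceSubmodule (Λ : Type u) [Ring Λ] (L N : Type u)
    [AddCommGroup L] [Module Λ L] [AddCommGroup N] [Module Λ N] : Submodule Λ N :=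
  ⨆ f : L →ₗ[Λ] N, LinearMap.range f

/-! Everything takes place in the modular lattice of submodules of `M = N₁ ⊕ N₂`, where a factor
`B / A` may be moved along a perspectivity to any relative complement. Suppose `M / A` is filtered,
where `A = A₁ ⊕ A₂` with `Aᵢ ≤ Nᵢ`; initially `A = 0`.

Let `a` be a maximal index among the factors. The vanishing of `Ext¹` allows all factors with index
equivalent to `a` to be moved to the bottom of the filtration, where they form a block `W / A` in
which the lowest factor `B / A ≃ Δ a` has a relative complement `Z`. The factors above `W` receive
no nonzero map from `Δ a`, so the projections `e` and `e'` of `M` onto `N₁` and `N₂` map `B` into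
`W`, and they induce endomorphisms of `W / Z ≃ Δ a` that sum to `1`. By Fitting's lemma `Δ a` has a
local endomorphism ring, so one of the two is invertible, and then `A + e B` or `A + e' B` replaces
`B` as a complement of `Z`. This enlarges `A₁` or `A₂` by one factor `Δ a` and shortens the
filtration above `A₁ ⊕ A₂`.
-/

section Factor

variable {Λ M N X Y : Type*} [Ring Λ] [AddCommGroup M] [Module Λ M] [AddCommGroup N] [Module Λ N]
  [AddCommGroup X] [Module Λ X] [AddCommGroup Y] [Module Λ Y]

/-- `X` is the factor of the step `A ≤ B` of a filtration: `B / A ≃ X`. -/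
def HasFactor (X : Type*) [AddCommGroup X] [Module Λ X] (A B : Submodule Λ M) : Prop :=
  A ≤ B ∧ Nonempty ((B ⧸ A.submoduleOf B) ≃ₗ[Λ] X)

theorem hasFactor_iff_exists_surjective {A B : Submodule Λ M} :
    HasFactor X A B ↔
      A ≤ B ∧ ∃ q : B →ₗ[Λ] X, Function.Surjective q ∧ ∀ x : B, q x = 0 ↔ (x : M) ∈ A := by
  refine and_congr_right fun _ ↦ ⟨fun ⟨e⟩ ↦ ?_, fun ⟨q, hq, hker⟩ ↦ ?_⟩
  · refine ⟨e.toLinearMap ∘ₗ (A.submoduleOf B).mkQ,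
      e.surjective.comp (Submodule.mkQ_surjective _), fun x ↦ ?_⟩
    rw [LinearMap.comp_apply, LinearEquiv.coe_coe, LinearEquiv.map_eq_zero_iff,
      Submodule.mkQ_apply, Submodule.Quotient.mk_eq_zero]
    rfl
  · have hker' : A.submoduleOf B = LinearMap.ker q := Submodule.ext fun x ↦ (hker x).symm
    exact ⟨Submodule.quotEquivOfEq _ _ hker' ≪≫ₗ q.quotKerEquivOfSurjective hq⟩

theorem HasFactor.lt [Nontrivial X] {A B : Submodule Λ M} (h : HasFactor X A B) : A < B := by
  obtain ⟨hAB, q, hq, hker⟩ := hasFactor_iff_exists_surjective.1 h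
  obtain ⟨x, hx⟩ := exists_ne (0 : X)
  obtain ⟨b, rfl⟩ := hq x
  exact lt_of_le_not_ge hAB fun hBA ↦ hx ((hker b).2 (hBA b.2))

theorem hasFactor_sup_iff_inf {A B : Submodule Λ M} :
    HasFactor X A (B ⊔ A) ↔ HasFactor X (B ⊓ A) B := by
  have e := LinearMap.quotientInfEquivSupQuotient B A
  rw [← Submodule.comap_inf] at e
  exact and_congr (iff_of_true le_sup_right inf_le_left)
    ⟨fun ⟨e'⟩ ↦ ⟨e ≪≫ₗ e'⟩, fun ⟨e'⟩ ↦ ⟨e.symm ≪≫ₗ e'⟩⟩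

theorem HasFactor.sup_left {A B Z : Submodule Λ M} (h : HasFactor X A B) (hZ : Z ⊓ B ≤ A) :
    HasFactor X (Z ⊔ A) (Z ⊔ B) := by
  have hinf : B ⊓ (A ⊔ Z) = A := by
    rw [inf_comm, sup_inf_assoc_of_le Z h.1, sup_eq_left.2 hZ]
  have hsup : B ⊔ (A ⊔ Z) = Z ⊔ B := by
    rw [← sup_assoc, sup_eq_left.2 h.1, sup_comm]
  rw [sup_comm Z A, ← hsup, hasFactor_sup_iff_inf, hinf]
  exact h

theorem HasFactor.inf_left {A B Z : Submodule Λ M} (h : HasFactor X A B) (hZ : B ≤ A ⊔ Z) :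
    HasFactor X (Z ⊓ A) (Z ⊓ B) := by
  have hinf : (Z ⊓ B) ⊓ A = Z ⊓ A := by rw [inf_assoc, inf_eq_right.2 h.1]
  have hsup : (Z ⊓ B) ⊔ A = B := by
    rw [sup_comm, ← sup_inf_assoc_of_le Z h.1, inf_eq_right.2 hZ]
  rw [← hinf, ← hasFactor_sup_iff_inf, hsup]
  exact h

theorem HasFactor.comap {A B : Submodule Λ M} (h : HasFactor X A B) {f : N →ₗ[Λ] M}
    (hf : B ≤ LinearMap.range f) : HasFactor X (A.comap f) (B.comap f) := by
  obtain ⟨hAB, q, hq, hker⟩ := hasFactor_iff_exists_surjective.1 h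
  refine hasFactor_iff_exists_surjective.2
    ⟨Submodule.comap_mono hAB, q ∘ₗ f.restrict fun _ hx ↦ hx, hq.comp ?_, fun x ↦ hker _⟩
  rintro ⟨b, hb⟩
  obtain ⟨n, rfl⟩ := hf hb
  exact ⟨⟨n, hb⟩, rfl⟩

theorem HasFactor.map_le {A B : Submodule Λ M} {C D : Submodule Λ N}
    (hX : HasFactor X A B) (hY : HasFactor Y C D) (hom : ∀ u : X →ₗ[Λ] Y, u = 0)
    {f : M →ₗ[Λ] N} (hA : A.map f ≤ C) (hB : B.map f ≤ D) : B.map f ≤ C := by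
  obtain ⟨-, ⟨e⟩⟩ := hX
  obtain ⟨-, q, -, hker⟩ := hasFactor_iff_exists_surjective.1 hY
  let φ : B →ₗ[Λ] Y := q ∘ₗ f.restrict (Submodule.map_le_iff_le_comap.1 hB)
  have hφ : A.submoduleOf B ≤ LinearMap.ker φ :=
    fun x hx ↦ (hker _).2 (hA (Submodule.mem_map_of_mem hx))
  rintro _ ⟨b, hb, rfl⟩
  have h0 := LinearMap.congr_fun (hom ((A.submoduleOf B).liftQ φ hφ ∘ₗ e.symm.toLinearMap))
    (e (Submodule.Quotient.mk ⟨b, hb⟩))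
  rw [LinearMap.comp_apply, LinearEquiv.coe_coe, e.symm_apply_apply] at h0
  exact (hker _).1 h0

end Factor

section Split

variable {Λ M X Y : Type u} [Ring Λ] [AddCommGroup M] [Module Λ M] [AddCommGroup X] [Module Λ X]
  [AddCommGroup Y] [Module Λ Y] {A B C : Submodule Λ M}

theorem HasFactor.exists_section (hX : HasFactor X A B) (hBC : B ≤ C) {q : C →ₗ[Λ] Y}
    (hq : Function.Surjective q) (hker : LinearMap.ker q = B.submoduleOf C)
    (hsplit : EverySESSplits Λ X Y) :
    ∃ s : Y →ₗ[Λ] C ⧸ A.submoduleOf C, ∀ y c, (A.submoduleOf C).mkQ c = s y → q c = y := by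
  obtain ⟨hAB, ⟨e⟩⟩ := hX
  let K := A.submoduleOf C
  let i : (B ⧸ A.submoduleOf B) →ₗ[Λ] C ⧸ K :=
    (A.submoduleOf B).mapQ K (Submodule.inclusion hBC) le_rfl
  let g : C ⧸ K →ₗ[Λ] Y := K.liftQ q (hker ▸ Submodule.comap_mono hAB)
  have hi : Function.Injective i :=
    LinearMap.ker_eq_bot.1 ((Submodule.ker_mapQ ..).trans (Submodule.mkQ_map_self _))
  have hg : Function.Surjective g := fun y ↦ (hq y).imp' K.mkQ fun _ h ↦ h
  have hig : LinearMap.range i = LinearMap.ker g := calc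
    LinearMap.range i = (LinearMap.range (Submodule.inclusion hBC)).map K.mkQ :=
      Submodule.range_mapQ ..
    _ = (LinearMap.ker q).map K.mkQ := by rw [Submodule.range_inclusion, hker]; rfl
    _ = LinearMap.ker g := (Submodule.ker_liftQ ..).symm
  obtain ⟨s, hs⟩ := hsplit (C ⧸ K) (i ∘ₗ e.symm.toLinearMap) g
    (hi.comp e.symm.injective) hg (by rwa [LinearEquiv.range_comp])
  exact ⟨s, fun y c hc ↦ (congrArg g hc).trans (LinearMap.congr_fun hs y)⟩

theorem HasFactor.exists_relative_complement (hX : HasFactor X A B) (hY : HasFactor Y B C)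
    (hsplit : EverySESSplits Λ X Y) : ∃ Z : Submodule Λ M, B ⊓ Z = A ∧ B ⊔ Z = C := by
  obtain ⟨hBC, q, hq, hker⟩ := hasFactor_iff_exists_surjective.1 hY
  have hAC : A ≤ C := hX.1.trans hBC
  let K := A.submoduleOf C
  obtain ⟨s, hs⟩ := hX.exists_section hBC hq (Submodule.ext hker) hsplit
  let Z : Submodule Λ C := (LinearMap.range s).comap K.mkQ
  refine ⟨Z.map C.subtype, le_antisymm ?_ ?_, le_antisymm ?_ ?_⟩
  · rintro _ ⟨hcB, c, ⟨y, hy⟩, rfl⟩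
    have hy0 : y = 0 := (hs y c hy.symm).symm.trans ((hker c).2 hcB)
    rw [hy0, map_zero] at hy
    exact (Submodule.Quotient.mk_eq_zero K).1 hy.symm
  · refine fun a ha ↦ ⟨hX.1 ha, ⟨a, hAC ha⟩, ⟨0, ?_⟩, rfl⟩
    rw [map_zero]
    exact ((Submodule.Quotient.mk_eq_zero K).2 ha).symm
  · exact sup_le hBC (Submodule.map_subtype_le C Z)
  · intro c hc
    obtain ⟨z, hz⟩ := K.mkQ_surjective (s (q ⟨c, hc⟩))
    have hcz : c - z ∈ B := (hker (⟨c, hc⟩ - z)).1 (by rw [map_sub, hs _ z hz, sub_self])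
    exact Submodule.mem_sup.2 ⟨c - z, hcz, z, ⟨z, ⟨_, hz.symm⟩, rfl⟩, sub_add_cancel _ _⟩

end Split

section Exchange

variable {Λ M N X Y : Type*} [Ring Λ] [AddCommGroup M] [Module Λ M] [AddCommGroup N] [Module Λ N]
  [AddCommGroup X] [Module Λ X] [AddCommGroup Y] [Module Λ Y]

theorem exists_linearMap_comp_eq_of_surjective {q : N →ₗ[Λ] X} (hq : Function.Surjective q)
    {f : N →ₗ[Λ] Y} (h : ∀ n, q n = 0 → f n = 0) : ∃ u : X →ₗ[Λ] Y, ∀ n, u (q n) = f n := by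
  have hle : LinearMap.ker q ≤ LinearMap.ker f := h
  refine ⟨(LinearMap.ker q).liftQ f hle ∘ₗ (q.quotKerEquivOfSurjective hq).symm.toLinearMap,
    fun n ↦ ?_⟩
  have hn : (q.quotKerEquivOfSurjective hq).symm (q n) = Submodule.Quotient.mk n :=
    (LinearEquiv.symm_apply_eq _).2 rfl
  rw [LinearMap.comp_apply, LinearEquiv.coe_coe, hn, Submodule.liftQ_apply]

theorem relative_complement_sup_map {A B Z W : Submodule Λ M} {e : M →ₗ[Λ] M}
    (hinf : B ⊓ Z = A) (hsup : B ⊔ Z = W) (hA : A.map e ≤ A) (hB : B.map e ≤ W)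
    {q : W →ₗ[Λ] X} (hker : ∀ x : W, q x = 0 ↔ (x : M) ∈ Z) (hBW : B ≤ W)
    (hq : Function.Surjective (q ∘ₗ Submodule.inclusion hBW))
    {u : X →ₗ[Λ] X} (hu : Function.Bijective u)
    (huq : ∀ b : B, u (q (Submodule.inclusion hBW b)) =
      q ⟨e b, hB (Submodule.mem_map_of_mem b.2)⟩) :
    (A ⊔ B.map e) ⊓ Z = A ∧ (A ⊔ B.map e) ⊔ Z = W := by
  have hAZ : A ≤ Z := hinf ▸ inf_le_right
  have hAW : A ≤ W := hAZ.trans (hsup ▸ le_sup_right)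
  constructor
  · rw [sup_inf_assoc_of_le _ hAZ, sup_eq_left]
    rintro _ ⟨⟨b, hb, rfl⟩, hZ⟩
    have hqb : q ⟨b, hBW hb⟩ = 0 :=
      hu.1 ((huq ⟨b, hb⟩).trans (((hker _).2 hZ).trans (map_zero u).symm))
    exact hA (Submodule.mem_map_of_mem (hinf ▸ ⟨hb, (hker _).1 hqb⟩))
  · refine le_antisymm (sup_le (sup_le hAW hB) (hsup ▸ le_sup_right)) fun w hw ↦ ?_
    obtain ⟨x, hx⟩ := hu.2 (q ⟨w, hw⟩)
    obtain ⟨b, rfl⟩ := hq x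
    have heb : e b ∈ B.map e := Submodule.mem_map_of_mem b.2
    have hwb : w - e b ∈ Z := (hker (⟨w, hw⟩ - ⟨e b, hB heb⟩)).1 (by
      rw [map_sub, ← hx, LinearMap.comp_apply, huq, sub_self])
    exact Submodule.mem_sup.2 ⟨e b, le_sup_right (a := A) heb, _, hwb, add_sub_cancel _ _⟩

theorem HasFactor.exchange [IsLocalRing (Module.End Λ X)] {A B Z W : Submodule Λ M}
    (hX : HasFactor X A B) (hinf : B ⊓ Z = A) (hsup : B ⊔ Z = W) {e e' : Module.End Λ M}
    (hee' : e + e' = 1) (hA : A.map e ≤ A) (hA' : A.map e' ≤ A)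
    (hB : B.map e ≤ W) (hB' : B.map e' ≤ W) :
    ((A ⊔ B.map e) ⊓ Z = A ∧ (A ⊔ B.map e) ⊔ Z = W) ∨
      ((A ⊔ B.map e') ⊓ Z = A ∧ (A ⊔ B.map e') ⊔ Z = W) := by
  have hAZ : A ≤ Z := hinf ▸ inf_le_right
  have hBW : B ≤ W := hsup ▸ le_sup_left
  have hZW : HasFactor X Z W := by
    rw [← hsup, hasFactor_sup_iff_inf, hinf]
    exact hX
  obtain ⟨-, q, hq, hker⟩ := hasFactor_iff_exists_surjective.1 hZW
  let p : B →ₗ[Λ] X := q ∘ₗ Submodule.inclusion hBW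
  have hp : Function.Surjective p := by
    intro x
    obtain ⟨⟨w, hw⟩, rfl⟩ := hq x
    obtain ⟨b, hb, z, hz, rfl⟩ := Submodule.mem_sup.1 (hsup ▸ hw)
    refine ⟨⟨b, hb⟩, sub_eq_zero.1 ?_⟩
    rw [LinearMap.comp_apply, ← map_sub, hker]
    simpa using hz
  have induced {f : Module.End Λ M} (hfA : A.map f ≤ A) (hfB : B.map f ≤ W) :
      ∃ u : Module.End Λ X, ∀ b : B, u (p b) = q ⟨f b, hfB (Submodule.mem_map_of_mem b.2)⟩ :=
    exists_linearMap_comp_eq_of_surjective hp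
      (f := q ∘ₗ f.restrict (Submodule.map_le_iff_le_comap.1 hfB)) fun b hb ↦
        (hker _).2 (hAZ (hfA (Submodule.mem_map_of_mem (hinf ▸ ⟨b.2, (hker _).1 hb⟩))))
  obtain ⟨u, hu⟩ := induced hA hB
  obtain ⟨u', hu'⟩ := induced hA' hB'
  have huu' : u + u' = 1 := by
    ext x
    obtain ⟨b, rfl⟩ := hp x
    rw [LinearMap.add_apply, hu, hu', ← map_add]
    exact congrArg q (Subtype.ext (LinearMap.congr_fun hee' b))
  exact (IsLocalRing.isUnit_or_isUnit_of_add_one huu').imp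
    (fun h ↦ relative_complement_sup_map hinf hsup hA hB hker hBW hp
      ((Module.End.isUnit_iff u).1 h) hu)
    (fun h ↦ relative_complement_sup_map hinf hsup hA' hB' hker hBW hp
      ((Module.End.isUnit_iff u').1 h) hu')

end Exchange

/-- `HasFactors Δ [ω₁, …, ωₙ] A C`: there is a chain from `A` up to `C` whose successive factors
are `Δ ω₁, …, Δ ωₙ`, listed from the bottom. -/
inductive HasFactors {Λ M Ω : Type*} [Ring Λ] [AddCommGroup M] [Module Λ M]
    (Δ : Ω → Type*) [∀ ω, AddCommGroup (Δ ω)] [∀ ω, Module Λ (Δ ω)] :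
    List Ω → Submodule Λ M → Submodule Λ M → Prop
  | nil (A : Submodule Λ M) : HasFactors Δ [] A A
  | cons {ω : Ω} {L : List Ω} {A B C : Submodule Λ M} :
      HasFactor (Δ ω) A B → HasFactors Δ L B C → HasFactors Δ (ω :: L) A C

namespace HasFactors

section Lattice

variable {Λ M N X Ω : Type*} [Ring Λ] [AddCommGroup M] [Module Λ M] [AddCommGroup N] [Module Λ N]
  [AddCommGroup X] [Module Λ X] {Δ : Ω → Type*} [∀ ω, AddCommGroup (Δ ω)] [∀ ω, Module Λ (Δ ω)]
  {L L₁ L₂ : List Ω} {A B C W Z : Submodule Λ M}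

protected theorem le (h : HasFactors Δ L A C) : A ≤ C := by
  induction h with
  | nil => exact le_rfl
  | cons hAB _ ih => exact hAB.1.trans ih

theorem eq_of_nil : HasFactors Δ [] A C → A = C
  | .nil _ => rfl

protected theorem append (h₁ : HasFactors Δ L₁ A B) (h₂ : HasFactors Δ L₂ B C) :
    HasFactors Δ (L₁ ++ L₂) A C := by
  induction h₁ with
  | nil => exact h₂
  | cons hAB _ ih => exact .cons hAB (ih h₂)

theorem exists_of_append (h : HasFactors Δ (L₁ ++ L₂) A C) :
    ∃ B, HasFactors Δ L₁ A B ∧ HasFactors Δ L₂ B C := by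
  induction L₁ generalizing A with
  | nil => exact ⟨A, .nil A, h⟩
  | cons ω L₁ ih =>
    obtain _ | ⟨hAB, hBC⟩ := h
    obtain ⟨B, h₁, h₂⟩ := ih hBC
    exact ⟨B, .cons hAB h₁, h₂⟩

theorem sup_left (h : HasFactors Δ L A C) (hZ : Z ⊓ C ≤ A) :
    HasFactors Δ L (Z ⊔ A) (Z ⊔ C) := by
  induction h with
  | nil => exact .nil _
  | cons hAB hBC ih =>
    exact .cons (hAB.sup_left ((inf_le_inf_left Z hBC.le).trans hZ)) (ih (hZ.trans hAB.1))

theorem inf_left (h : HasFactors Δ L A C) (hZ : C ≤ A ⊔ Z) :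
    HasFactors Δ L (Z ⊓ A) (Z ⊓ C) := by
  induction h with
  | nil => exact .nil _
  | cons hAB hBC ih =>
    exact .cons (hAB.inf_left (hBC.le.trans hZ)) (ih (hZ.trans (sup_le_sup_right hAB.1 Z)))

protected theorem comap (h : HasFactors Δ L A C) {f : N →ₗ[Λ] M} (hf : C ≤ LinearMap.range f) :
    HasFactors Δ L (A.comap f) (C.comap f) := by
  induction h with
  | nil => exact .nil _
  | cons hAB hBC ih => exact .cons (hAB.comap (hBC.le.trans hf)) (ih hf)

theorem map_le {V D : Submodule Λ N} (h : HasFactors Δ L V D)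
    (hX : HasFactor X A B) (hom : ∀ ω ∈ L, ∀ u : X →ₗ[Λ] Δ ω, u = 0) {f : M →ₗ[Λ] N}
    (hA : A.map f ≤ V) (hB : B.map f ≤ D) : B.map f ≤ V := by
  induction h with
  | nil => exact hB
  | cons hVD _ ih =>
    exact hX.map_le hVD (hom _ List.mem_cons_self) hA
      (ih (fun ω hω ↦ hom ω (List.mem_cons_of_mem _ hω)) (hA.trans hVD.1) hB)

end Lattice

section Reorder

variable {Λ M X : Type u} {Ω : Type*} [Ring Λ] [AddCommGroup M] [Module Λ M] [AddCommGroup X]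
  [Module Λ X] {Δ : Ω → Type u} [∀ ω, AddCommGroup (Δ ω)] [∀ ω, Module Λ (Δ ω)]
  {L L₁ L₂ : List Ω} {a : Ω} {A B C W : Submodule Λ M}

theorem exists_relative_complement (h : HasFactors Δ L B W) (hX : HasFactor X A B)
    (hsplit : ∀ ω ∈ L, EverySESSplits Λ X (Δ ω)) :
    ∃ Z : Submodule Λ M, B ⊓ Z = A ∧ B ⊔ Z = W ∧ HasFactors Δ L A Z ∧ HasFactor X Z W := by
  induction h generalizing A with
  | nil B => exact ⟨A, inf_eq_right.2 hX.1, sup_eq_left.2 hX.1, .nil A, hX⟩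
  | @cons ω L B C W hBC _ ih =>
    obtain ⟨Z₀, hinf₀, hsup₀⟩ :=
      hX.exists_relative_complement hBC (hsplit ω List.mem_cons_self)
    have hAZ₀ : HasFactor (Δ ω) A Z₀ := by
      rwa [← hinf₀, inf_comm, ← hasFactor_sup_iff_inf, sup_comm, hsup₀]
    have hZ₀C : HasFactor X Z₀ C := by rwa [← hsup₀, hasFactor_sup_iff_inf, hinf₀]
    obtain ⟨Z, hinf, hsup, hZ₀Z, hZW⟩ :=
      ih hZ₀C fun b hb ↦ hsplit b (List.mem_cons_of_mem _ hb)
    refine ⟨Z, ?_, ?_, .cons hAZ₀ hZ₀Z, hZW⟩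
    · rw [← inf_eq_left.2 hBC.1, inf_assoc, hinf, hinf₀]
    · rw [← sup_eq_right.2 hZ₀Z.le, ← sup_assoc, hsup₀, hsup]

theorem append_singleton_of_splits (h : HasFactors Δ L B W) (hX : HasFactor (Δ a) A B)
    (hsplit : ∀ ω ∈ L, EverySESSplits Λ (Δ a) (Δ ω)) : HasFactors Δ (L ++ [a]) A W := by
  obtain ⟨Z, -, -, hAZ, hZW⟩ := h.exists_relative_complement hX hsplit
  exact hAZ.append (.cons hZW (.nil W))

theorem filter_append_filter_not {p : Ω → Bool} (h : HasFactors Δ L A C)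
    (hsplit : ∀ a b, ¬p a → p b → EverySESSplits Λ (Δ a) (Δ b)) :
    HasFactors Δ (L.filter p ++ L.filter (!p ·)) A C := by
  induction h with
  | nil A => exact .nil A
  | @cons a L A B C hAB _ ih =>
    by_cases ha : p a
    · rw [List.filter_cons_of_pos ha, List.filter_cons_of_neg (by simpa using ha)]
      exact .cons hAB ih
    · rw [List.filter_cons_of_neg ha, List.filter_cons_of_pos (by simpa using ha)]
      obtain ⟨W, hBW, hWC⟩ := ih.exists_of_append
      rw [← List.singleton_append, ← List.append_assoc]
      refine (hBW.append_singleton_of_splits hAB fun b hb ↦ hsplit a b ha ?_).append hWC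
      exact List.of_mem_filter hb

theorem exists_maximal_block [Preorder Ω]
    (hom : ∀ ω ω' (u : Δ ω →ₗ[Λ] Δ ω'), u ≠ 0 → ω ≤ ω')
    (ext : ∀ ω ω', ¬ω < ω' → EverySESSplits Λ (Δ ω') (Δ ω))
    (h : HasFactors Δ L A C) (hL : L ≠ []) :
    ∃ a L₁ L₂ B, (L₁ ++ L₂).length < L.length ∧
      HasFactor (Δ a) A B ∧ HasFactors Δ (L₁ ++ L₂) B C ∧
      (∀ b ∈ L₁, EverySESSplits Λ (Δ a) (Δ b)) ∧ ∀ b ∈ L₂, ∀ u : Δ a →ₗ[Λ] Δ b, u = 0 := by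
  classical
  obtain ⟨c, hc⟩ := L.toFinset.exists_maximal ((List.toFinset_nonempty_iff L).2 hL)
  have hcL : c ∈ L := List.mem_toFinset.1 hc.prop
  have hmax {b} (hb : b ∈ L) (hcb : c ≤ b) : b ≤ c := hc.le_of_ge (List.mem_toFinset.2 hb) hcb
  let p : Ω → Bool := fun b ↦ c ≤ b
  have hsorted := h.filter_append_filter_not (p := p) fun a b hca hcb ↦
    ext b a fun hba ↦ hca (decide_eq_true ((of_decide_eq_true hcb).trans hba.le))
  have hlen := (L.filter_append_perm p).length_eq
  have htop {b} (hb : b ∈ L.filter p) : b ∈ L ∧ c ≤ b := by simpa [p] using hb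
  have hrest {b} (hb : b ∈ L.filter (!p ·)) : ¬c ≤ b := by simpa [p] using List.of_mem_filter hb
  have hcp : c ∈ L.filter p := by simpa [p] using hcL
  obtain ⟨a, L₁, haL₁⟩ := List.exists_cons_of_ne_nil (List.ne_nil_of_mem hcp)
  rw [haL₁] at htop hsorted hlen
  have ha := htop List.mem_cons_self
  obtain _ | ⟨hAB, hBC⟩ := hsorted
  refine ⟨a, L₁, L.filter (!p ·), _, ?_, hAB, hBC, fun b hb ↦ ext b a ?_, fun b hb u ↦ ?_⟩
  · rw [← hlen]
    exact Nat.lt_succ_self _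
  · have hb := htop (List.mem_cons_of_mem a hb)
    exact fun hba ↦ hba.not_ge ((hmax ha.1 ha.2).trans hb.2)
  · exact of_not_not fun hu ↦ hrest hb (ha.2.trans (hom a b u hu))

theorem exchange [IsLocalRing (Module.End Λ (Δ a))]
    (hX : HasFactor (Δ a) A B) (h : HasFactors Δ (L₁ ++ L₂) B C)
    (hsplit : ∀ b ∈ L₁, EverySESSplits Λ (Δ a) (Δ b))
    (hom : ∀ b ∈ L₂, ∀ u : Δ a →ₗ[Λ] Δ b, u = 0)
    {e e' : Module.End Λ M} (hee' : e + e' = 1) (hA : A.map e ≤ A) (hA' : A.map e' ≤ A)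
    (hB : B.map e ≤ C) (hB' : B.map e' ≤ C) :
    ∃ f, (f = e ∨ f = e') ∧ HasFactor (Δ a) A (A ⊔ B.map f) ∧
      HasFactors Δ (L₁ ++ L₂) (A ⊔ B.map f) C := by
  obtain ⟨W, hBW, hWC⟩ := h.exists_of_append
  obtain ⟨Z, hinf, hsup, hAZ, hZW⟩ := hBW.exists_relative_complement hX hsplit
  have hAW : A ≤ W := hX.1.trans hBW.le
  have factors_of_complement {D : Submodule Λ M} (hD : D ⊓ Z = A ∧ D ⊔ Z = W) :
      HasFactor (Δ a) A D ∧ HasFactors Δ (L₁ ++ L₂) D C := by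
    obtain ⟨hDinf, hDsup⟩ := hD
    constructor
    · rwa [← hDinf, ← hasFactor_sup_iff_inf, hDsup]
    · have hDW := hAZ.sup_left hDinf.le
      rw [sup_eq_left.2 (hDinf ▸ inf_le_left), hDsup] at hDW
      exact hDW.append hWC
  obtain hD | hD := hX.exchange hinf hsup hee' hA hA'
    (hWC.map_le hX hom (hA.trans hAW) hB) (hWC.map_le hX hom (hA'.trans hAW) hB')
  · exact ⟨e, .inl rfl, factors_of_complement hD⟩
  · exact ⟨e', .inr rfl, factors_of_complement hD⟩

end Reorder

end HasFactors

section Summands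

theorem eq_of_le_of_disjoint_of_sup_eq_top {α : Type*} [Lattice α] [BoundedOrder α]
    [IsModularLattice α] {a b c : α} (hac : a ≤ c) (hcb : Disjoint c b) (h : a ⊔ b = ⊤) : a = c :=
  eq_of_le_of_inf_le_of_sup_le hac (hcb.eq_bot.le.trans bot_le) (h ▸ le_top)

theorem HasFactor.of_sup_right {Λ M X : Type*} [Ring Λ] [AddCommGroup M] [Module Λ M]
    [AddCommGroup X] [Module Λ X] {A B C : Submodule Λ M} (h : HasFactor X (A ⊔ C) (B ⊔ C))
    (hAB : A ≤ B) (hBC : Disjoint B C) : HasFactor X A B := by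
  have := h.inf_left (Z := B) (sup_le le_sup_right (le_sup_right.trans le_sup_left))
  rwa [inf_comm, sup_inf_assoc_of_le C hAB, hBC.symm.eq_bot, sup_bot_eq, inf_sup_self] at this

theorem map_projection_sup_le {Λ M : Type*} [Ring Λ] [AddCommGroup M] [Module Λ M]
    {N₁ N₂ A₁ A₂ : Submodule Λ M} (h : IsCompl N₁ N₂) (h₁ : A₁ ≤ N₁) (h₂ : A₂ ≤ N₂) :
    (A₁ ⊔ A₂).map (N₁.projection N₂ h) ≤ A₁ := by
  rw [Submodule.map_sup, sup_le_iff]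
  constructor
  · rintro _ ⟨a, ha, rfl⟩
    rwa [Submodule.projection_apply_of_mem_left h (h₁ ha)]
  · rintro _ ⟨a, ha, rfl⟩
    rw [(Submodule.projection_apply_eq_zero_iff h).2 (h₂ ha)]
    exact zero_mem A₁

variable {Λ M : Type u} {Ω : Type*} [Ring Λ] [AddCommGroup M] [Module Λ M] [Preorder Ω]
  {Δ : Ω → Type u} [∀ ω, AddCommGroup (Δ ω)] [∀ ω, Module Λ (Δ ω)]
  [∀ ω, IsLocalRing (Module.End Λ (Δ ω))] {L : List Ω} {N₁ N₂ A₁ A₂ : Submodule Λ M}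

theorem HasFactors.exists_enlarge_summand
    (hom : ∀ ω ω' (u : Δ ω →ₗ[Λ] Δ ω'), u ≠ 0 → ω ≤ ω')
    (ext : ∀ ω ω', ¬ω < ω' → EverySESSplits Λ (Δ ω') (Δ ω))
    (hN : IsCompl N₁ N₂) (h₁ : A₁ ≤ N₁) (h₂ : A₂ ≤ N₂) (hL : HasFactors Δ L (A₁ ⊔ A₂) ⊤)
    (hne : L ≠ []) :
    ∃ a K, K.length < L.length ∧
      ((∃ B₁ ≤ N₁, HasFactor (Δ a) A₁ B₁ ∧ HasFactors Δ K (B₁ ⊔ A₂) ⊤) ∨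
        ∃ B₂ ≤ N₂, HasFactor (Δ a) A₂ B₂ ∧ HasFactors Δ K (A₁ ⊔ B₂) ⊤) := by
  obtain ⟨a, K₁, K₂, B, hlt, hX, hK, hsplit, hzero⟩ := hL.exists_maximal_block hom ext hne
  have he := map_projection_sup_le hN h₁ h₂
  have he' := map_projection_sup_le hN.symm h₂ h₁
  rw [sup_comm] at he'
  refine ⟨a, K₁ ++ K₂, hlt, ?_⟩
  obtain ⟨f, rfl | rfl, hf, hfK⟩ := HasFactors.exchange hX hK hsplit hzero
    (Submodule.projection_add_projection_eq_id hN) (he.trans le_sup_left)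
    (he'.trans le_sup_right) le_top le_top
  · have hB : A₁ ⊔ B.map (N₁.projection N₂ hN) ≤ N₁ :=
      sup_le h₁ (LinearMap.map_le_range.trans (Submodule.range_projection hN).le)
    rw [sup_right_comm] at hf hfK
    exact .inl ⟨_, hB, hf.of_sup_right le_sup_left (hN.disjoint.mono hB h₂), hfK⟩
  · have hB : A₂ ⊔ B.map (N₂.projection N₁ hN.symm) ≤ N₂ :=
      sup_le h₂ (LinearMap.map_le_range.trans (Submodule.range_projection hN.symm).le)
    rw [sup_assoc] at hf hfK
    rw [sup_comm A₁ A₂, sup_comm A₁ (A₂ ⊔ _)] at hf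
    exact .inr ⟨_, hB, hf.of_sup_right le_sup_left (hN.symm.disjoint.mono hB h₁), hfK⟩

theorem HasFactors.exists_of_isCompl
    (hom : ∀ ω ω' (u : Δ ω →ₗ[Λ] Δ ω'), u ≠ 0 → ω ≤ ω')
    (ext : ∀ ω ω', ¬ω < ω' → EverySESSplits Λ (Δ ω') (Δ ω))
    (hN : IsCompl N₁ N₂) (h₁ : A₁ ≤ N₁) (h₂ : A₂ ≤ N₂) (hL : HasFactors Δ L (A₁ ⊔ A₂) ⊤) :
    (∃ L₁, HasFactors Δ L₁ A₁ N₁) ∧ ∃ L₂, HasFactors Δ L₂ A₂ N₂ := by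
  induction hn : L.length using Nat.strong_induction_on generalizing L A₁ A₂ with
  | _ n ih =>
    obtain rfl | hne := eq_or_ne L []
    · have hA : A₁ ⊔ A₂ = ⊤ := hL.eq_of_nil
      have hA₁ : A₁ = N₁ := eq_of_le_of_disjoint_of_sup_eq_top h₁ (hN.disjoint.mono_right h₂) hA
      have hA₂ : A₂ = N₂ :=
        eq_of_le_of_disjoint_of_sup_eq_top h₂ (hN.symm.disjoint.mono_right h₁) (sup_comm A₁ A₂ ▸ hA)
      exact ⟨⟨[], hA₁ ▸ .nil A₁⟩, ⟨[], hA₂ ▸ .nil A₂⟩⟩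
    obtain ⟨a, K, hlt, ⟨B₁, hB₁, hAB, hK⟩ | ⟨B₂, hB₂, hAB, hK⟩⟩ :=
      hL.exists_enlarge_summand hom ext hN h₁ h₂ hne
    · exact (ih _ (hn ▸ hlt) hB₁ h₂ hK rfl).imp (fun ⟨L₁, h⟩ ↦ ⟨a :: L₁, .cons hAB h⟩) id
    · exact (ih _ (hn ▸ hlt) h₁ hB₂ hK rfl).imp id fun ⟨L₂, h⟩ ↦ ⟨a :: L₂, .cons hAB h⟩

end Summands

section Chains

variable {Λ M Ω : Type*} [Ring Λ] [AddCommGroup M] [Module Λ M] {Δ : Ω → Type*}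
  [∀ ω, AddCommGroup (Δ ω)] [∀ ω, Module Λ (Δ ω)] {L : List Ω} {A C : Submodule Λ M}

theorem HasFactors.exists_strictMono [∀ ω, Nontrivial (Δ ω)] (h : HasFactors Δ L A C) :
    ∃ (t : ℕ) (F : Fin (t + 1) → Submodule Λ M), F 0 = A ∧ F (Fin.last t) = C ∧ StrictMono F ∧
      ∀ i : Fin t, ∃ ω, HasFactor (Δ ω) (F i.castSucc) (F i.succ) := by
  induction h with
  | nil A => exact ⟨0, fun _ ↦ A, rfl, rfl, Subsingleton.strictMono (α := Fin 1) _, fun i ↦ i.elim0⟩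
  | @cons ω L A B C hAB _ ih =>
    obtain ⟨t, F, rfl, hlast, hmono, hF⟩ := ih
    refine ⟨t + 1, Fin.cons A F, rfl, hlast, ?_, ?_⟩
    · exact Fin.strictMono_iff_lt_succ.2 (Fin.cases hAB.lt fun i ↦ hmono i.castSucc_lt_succ)
    · exact Fin.cases ⟨ω, hAB⟩ hF

theorem exists_hasFactors_of_forall_hasFactor {t : ℕ} {F : Fin (t + 1) → Submodule Λ M}
    (hF : ∀ i : Fin t, ∃ ω, HasFactor (Δ ω) (F i.castSucc) (F i.succ)) (i : Fin (t + 1)) :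
    ∃ L, HasFactors Δ L (F 0) (F i) := by
  induction i using Fin.induction with
  | zero => exact ⟨[], .nil _⟩
  | succ i ih =>
    obtain ⟨L, hL⟩ := ih
    obtain ⟨ω, hω⟩ := hF i
    exact ⟨L ++ [ω], hL.append (.cons hω (.nil _))⟩

end Chains

section MemFiltCat

variable {Λ M : Type u} {Ω : Type v} [Ring Λ] [AddCommGroup M] [Module Λ M] [Preorder Ω]
  [Fintype Ω] {Δ : Ω → Type u} [∀ ω, AddCommGroup (Δ ω)] [∀ ω, Module Λ (Δ ω)]
  [∀ ω, Nontrivial (Δ ω)]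

theorem memFiltCat_iff_exists_hasFactors :
    MemFiltCat Λ Δ M ↔ ∃ L, HasFactors Δ L (⊥ : Submodule Λ M) ⊤ := by
  constructor
  · rintro ⟨t, F, h0, hlast, hmono, hF⟩
    rw [← h0, ← hlast]
    exact exists_hasFactors_of_forall_hasFactor
      (fun i ↦ (hF i).imp fun _ e ↦ ⟨hmono.monotone i.castSucc_lt_succ.le, e⟩) _
  · rintro ⟨L, hL⟩
    obtain ⟨t, F, h0, hlast, hmono, hF⟩ := hL.exists_strictMono
    exact ⟨t, F, h0, hlast, hmono, fun i ↦ (hF i).imp fun _ h ↦ h.2⟩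

theorem HasFactors.memFiltCat {L : List Ω} {N : Submodule Λ M} (h : HasFactors Δ L ⊥ N) :
    MemFiltCat Λ Δ N := by
  have hcomap := h.comap (f := N.subtype) N.range_subtype.ge
  rw [Submodule.comap_bot, Submodule.ker_subtype, Submodule.comap_subtype_self] at hcomap
  exact memFiltCat_iff_exists_hasFactors.2 ⟨L, hcomap⟩

end MemFiltCat

section LocalEnd

variable {Λ D : Type*} [Ring Λ] [AddCommGroup D] [Module Λ D]

theorem isUnit_or_isNilpotent_of_indecomposable [IsNoetherian Λ D] [IsArtinian Λ D]
    (hD : ∀ A B : Submodule Λ D, IsCompl A B → A = ⊥ ∨ B = ⊥) (f : Module.End Λ D) :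
    IsUnit f ∨ IsNilpotent f := by
  obtain ⟨n, hn⟩ := f.eventually_isCompl_ker_pow_range_pow.exists_forall_of_atTop
  obtain hker | hrange := hD _ _ (hn (n + 1) n.le_succ)
  · have hinj : Function.Injective (f ^ (n + 1)) := LinearMap.ker_eq_bot.1 hker
    have hunit : IsUnit (f ^ (n + 1)) :=
      (Module.End.isUnit_iff _).2 (IsArtinian.bijective_of_injective_endomorphism _ hinj)
    exact .inl ((isUnit_pow_succ_iff).1 hunit)
  · exact .inr ⟨n + 1, LinearMap.range_eq_bot.1 hrange⟩

theorem isLocalRing_end_of_indecomposable [IsNoetherian Λ D] [IsArtinian Λ D] [Nontrivial D]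
    (hD : ∀ A B : Submodule Λ D, IsCompl A B → A = ⊥ ∨ B = ⊥) :
    IsLocalRing (Module.End Λ D) :=
  .of_isUnit_or_isUnit_one_sub_self fun f ↦
    (isUnit_or_isNilpotent_of_indecomposable hD f).imp_right IsNilpotent.isUnit_one_sub

theorem nontrivial_of_nontrivial_end [Nontrivial (Module.End Λ D)] : Nontrivial D := by
  by_contra! h
  exact not_subsingleton (Module.End Λ D) inferInstance

end LocalEnd

theorem IsHomologicalSystem.isLocalRing_end {Λ : Type u} {Ω : Type v} [Ring Λ] [IsArtinianRing Λ]
    [Preorder Ω] [Fintype Ω] {Δ : Ω → Type u} [∀ ω, AddCommGroup (Δ ω)] [∀ ω, Module Λ (Δ ω)]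
    (hs : IsHomologicalSystem Λ Δ) (ω : Ω) : IsLocalRing (Module.End Λ (Δ ω)) :=
  have := hs.fg ω
  have := hs.nontrivial ω
  isLocalRing_end_of_indecomposable (hs.indecomposable ω)

theorem memFiltCat_closed_under_direct_summands_general {Λ M : Type u} {Ω : Type v} [Ring Λ]
    [AddCommGroup M] [Module Λ M] [Preorder Ω] [Fintype Ω]
    {Δ : Ω → Type u} [∀ ω, AddCommGroup (Δ ω)] [∀ ω, Module Λ (Δ ω)]
    [∀ ω, IsLocalRing (Module.End Λ (Δ ω))]
    (hom : ∀ ω ω' (u : Δ ω →ₗ[Λ] Δ ω'), u ≠ 0 → ω ≤ ω')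
    (ext : ∀ ω ω', ¬ω < ω' → EverySESSplits Λ (Δ ω') (Δ ω))
    (hM : MemFiltCat Λ Δ M) {M₁ M₂ : Submodule Λ M} (hcompl : IsCompl M₁ M₂) :
    MemFiltCat Λ Δ M₁ ∧ MemFiltCat Λ Δ M₂ := by
  have (ω : Ω) : Nontrivial (Δ ω) := nontrivial_of_nontrivial_end (Λ := Λ)
  obtain ⟨L, hL⟩ := memFiltCat_iff_exists_hasFactors.1 hM
  rw [← sup_bot_eq ⊥] at hL
  obtain ⟨⟨_, h₁⟩, ⟨_, h₂⟩⟩ := hL.exists_of_isCompl hom ext hcompl bot_le bot_le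
  exact ⟨h₁.memFiltCat, h₂.memFiltCat⟩

/-- Corollary 9.3: the category `𝔉(Δ)` of `Δ`-filtered modules over an Artin algebra `Λ` is
closed under direct summands: if `M ∈ 𝔉(Δ)` and `M = M₁ ⊕ M₂`, then `M₁, M₂ ∈ 𝔉(Δ)`. -/
theorem memFiltCat_closed_under_direct_summands
    {R : Type u} [CommRing R] [IsArtinianRing R]
    {Λ : Type u} [Ring Λ] [Algebra R Λ] [Module.Finite R Λ]
    {Ω : Type v} [Preorder Ω] [Fintype Ω] [Nonempty Ω]
    (Δ : Ω → Type u) [∀ ω, AddCommGroup (Δ ω)] [∀ ω, Module Λ (Δ ω)]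
    (hs : IsHomologicalSystem Λ Δ)
    (M : Type u) [AddCommGroup M] [Module Λ M] [Module.Finite Λ M]
    (hM : MemFiltCat Λ Δ M)
    (M₁ M₂ : Submodule Λ M) (hsum : M₁ ⊔ M₂ = ⊤) (hdisj : M₁ ⊓ M₂ = ⊥) :
    MemFiltCat Λ Δ ↥M₁ ∧ MemFiltCat Λ Δ ↥M₂ := by
  have : IsArtinianRing Λ := .of_finite R Λ
  have := hs.isLocalRing_end
  exact memFiltCat_closed_under_direct_summands_general hs.hs3
    (fun ω ω' h ↦ hs.hs4 ω ω' (lt_iff_le_not_ge.not.1 h)) hM (.of_eq hdisj hsum)
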